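/- arXiv:1301.4391 — 2 statements merged into one kernel-verified Lean document; each statement's English description precedes it below -/
import Mathlib

section
/- The difference between the time–space reconstruction and the elliptic-reconstruction interpolant (Lemma on Û − ω, equation (2.19) of the paper): assuming the Crank–Nicolson relation Uⁿ = ΠⁿUⁿ⁻¹ − k_n·W(t_{n-1/2}), for every t ∈ [t_{n-1}, t_n] one has (Û − ω)(t) = (1/2)·(t_n − t)·(t − t_{n-1})·Rⁿ(w), where w := (2/k_n)·(W(t_{n-1/2}) − W(t_{n-1})). -/
open Complex intervalIntegral

/-!
The previous value `u` contributes equally to `Û` and `ω`, so `Û - ω` only compares the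
Crank–Nicolson increment with the integral of the affine function `f = Rⁿ ∘ W`. The increment
samples `f` at the midpoint of the time step `[a, b]`, while by the exact midpoint rule
`∫ s in a..t, f s` samples it at the midpoint of `[a, t]`. Hence
`Û t - ω t = (t - a) • (f ((a + b) / 2) - f ((a + t) / 2))`, and the two sampling points are
`(b - t) / 2` apart.
-/

section

variable {E : Type*} [NormedAddCommGroup E] [NormedSpace ℝ E]

/-- The time reconstruction on `[a, b]` with initial value `u`, projected initial value `v` and
time derivative governed by `f`. The paper's `Û` is the case `u = Rⁿ⁻¹Uⁿ⁻¹`, `v = Rⁿ(ΠⁿUⁿ⁻¹)`,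
`f = Rⁿ ∘ W`, extended here to all real times. -/
noncomputable def timeReconstruction (a b : ℝ) (u v : E) (f : ℝ → E) (t : ℝ) : E :=
  u + ((t - a) / (b - a)) • (v - u) - ∫ s in a..t, f s

/-- The linear interpolant with value `u` at `a` and `v` at `b`, in terms of the hat functions
`ℓ₀`, `ℓ₁`. The paper's `ω` is the case `u = Rⁿ⁻¹Uⁿ⁻¹`, `v = RⁿUⁿ`, extended here to all real
times. -/
noncomputable def linearInterpolant (a b : ℝ) (u v : E) (t : ℝ) : E :=
  ((b - t) / (b - a)) • u + ((t - a) / (b - a)) • v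

theorem timeReconstruction_sub_linearInterpolant {a b : ℝ} (hab : a ≠ b) (u v g : E)
    (f : ℝ → E) (t : ℝ) :
    timeReconstruction a b u v f t - linearInterpolant a b u (v - (b - a) • g) t =
      (t - a) • g - ∫ s in a..t, f s := by
  have hk : b - a ≠ 0 := sub_ne_zero.mpr hab.symm
  unfold timeReconstruction linearInterpolant
  match_scalars <;> field_simp <;> ring

theorem integral_eq_sub_smul_midpoint_of_affine [CompleteSpace E] {f : ℝ → E} {a : ℝ} {c : E}
    (hf : ∀ s, f s = f a + (s - a) • c) (b : ℝ) :
    ∫ s in a..b, f s = (b - a) • f ((a + b) / 2) := by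
  have integral_sub_left : ∫ s in a..b, (s - a) = (b - a) ^ 2 / 2 := by
    simp [integral_comp_sub_right (fun s : ℝ => s)]
  calc
    ∫ s in a..b, f s = ∫ s in a..b, (f a + (s - a) • c) := by simp only [← hf]
    _ = (∫ _ in a..b, f a) + ∫ s in a..b, (s - a) • c :=
      integral_add intervalIntegrable_const (Continuous.intervalIntegrable (by fun_prop) _ _)
    _ = (b - a) • f a + ((b - a) ^ 2 / 2) • c := by
      rw [integral_const, intervalIntegral.integral_smul_const, integral_sub_left]
    _ = (b - a) • f ((a + b) / 2) := by
      rw [hf ((a + b) / 2)]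
      module

end

theorem two_div_smul_sub_midpoint_of_affine {V : Type*} [AddCommGroup V] [Module ℝ V]
    {W : ℝ → V} {a b : ℝ} {c : V} (hab : a ≠ b) (hW : ∀ s, W s = W a + (s - a) • c) :
    (2 / (b - a)) • (W ((a + b) / 2) - W a) = c := by
  have hk : b - a ≠ 0 := sub_ne_zero.mpr hab.symm
  rw [hW ((a + b) / 2)]
  match_scalars <;> field_simp <;> ring

theorem time_space_reconstruction_difference_general
    {E : Type*} [NormedAddCommGroup E] [NormedSpace ℝ E] [CompleteSpace E]
    {V : Type*} [AddCommGroup V] [Module ℝ V]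
    {a b : ℝ} (hab : a ≠ b) {W : ℝ → V} {c : V} (hW : ∀ s, W s = W a + (s - a) • c)
    (R : V →ₗ[ℝ] E) (u : E) {p q : V} (hCN : q = p - (b - a) • W ((a + b) / 2)) (t : ℝ) :
    timeReconstruction a b u (R p) (fun s => R (W s)) t - linearInterpolant a b u (R q) t =
      ((1 / 2) * (b - t) * (t - a)) • R ((2 / (b - a)) • (W ((a + b) / 2) - W a)) := by
  have hRW (s : ℝ) : R (W s) = R (W a) + (s - a) • R c := by rw [hW s, map_add, map_smul]
  calc
    _ = (t - a) • R (W ((a + b) / 2)) - ∫ s in a..t, R (W s) := by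
      rw [hCN, map_sub, map_smul, timeReconstruction_sub_linearInterpolant hab]
    _ = (t - a) • R (W ((a + b) / 2)) - (t - a) • R (W ((a + t) / 2)) := by
      rw [integral_eq_sub_smul_midpoint_of_affine hRW]
    _ = ((1 / 2) * (b - t) * (t - a)) • R c := by
      rw [hRW ((a + b) / 2), hRW ((a + t) / 2)]
      module
    _ = _ := by rw [two_div_smul_sub_midpoint_of_affine hab hW]

/-- The difference between the time–space reconstruction `Û` and the
elliptic-reconstruction interpolant `ω` (equation (2.19) of the paper): under the
Crank–Nicolson relation `Uⁿ = ΠⁿUⁿ⁻¹ − kₙ·W(t_{n-1/2})`, for every `t ∈ [t_{n-1}, tₙ]`,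
`(Û − ω)(t) = (1/2)·(tₙ − t)·(t − t_{n-1})·Rⁿ(w)` with
`w := (2/kₙ)·(W(t_{n-1/2}) − W(t_{n-1}))`. -/
theorem time_space_reconstruction_difference
    {E : Type*} [NormedAddCommGroup E] [InnerProductSpace ℂ E] [CompleteSpace E]
    (tp tn : ℝ) (htptn : tp < tn)
    (V : Submodule ℂ E) [FiniteDimensional ℂ V]
    (W : ℝ → V) (c : V) (hW : ∀ t : ℝ, W t = W tp + ((t - tp : ℝ) : ℂ) • c)
    (R : V →ₗ[ℂ] E)
    (Rprev : E)   -- the element Rⁿ⁻¹Uⁿ⁻¹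
    (PU : V)      -- the element ΠⁿUⁿ⁻¹
    (Un : V)
    (hCN : Un = PU - ((tn - tp : ℝ) : ℂ) • W ((tp + tn) / 2))
    (Uhat ω : ℝ → E)
    (hUhat : ∀ t : ℝ,
      Uhat t = Rprev + (((t - tp) / (tn - tp) : ℝ) : ℂ) • (R PU - Rprev)
          - ∫ s in tp..t, R (W s))
    (hω : ∀ t : ℝ,
      ω t = (((tn - t) / (tn - tp) : ℝ) : ℂ) • Rprev
          + (((t - tp) / (tn - tp) : ℝ) : ℂ) • R Un) :
    ∀ t ∈ Set.Icc tp tn,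
      Uhat t - ω t
        = (((1 / 2) * (tn - t) * (t - tp) : ℝ) : ℂ) •
            R (((2 / (tn - tp) : ℝ) : ℂ) • (W ((tp + tn) / 2) - W tp)) := by
  intro t _
  simp only [Complex.coe_smul] at hW hCN hUhat hω ⊢
  rw [hUhat, hω]
  exact time_space_reconstruction_difference_general htptn.ne hW (R.restrictScalars ℝ) Rprev hCN t
end

section
/- Rewriting of the first residual (Lemma 3.4 of the paper): define R₁(t) := (Rⁿ(W(t)) − W(t)) − (Rⁿ(ΠⁿUⁿ⁻¹) − Rⁿ⁻¹Uⁿ⁻¹)/k_n + i·α·ℓ₀(t)·(Δⁿ⁻¹Uⁿ⁻¹ − Πⁿ(Δⁿ⁻¹Uⁿ⁻¹)). Then, assuming the Crank–Nicolson relation Uⁿ = ΠⁿUⁿ⁻¹ − k_n·W(t_{n-1/2}), for every t ∈ [t_{n-1}, t_n]: R₁(t) = (t − t_{n-1/2})·(Rⁿw − w) − ((RⁿUⁿ − Uⁿ) − (Rⁿ⁻¹Uⁿ⁻¹ − Uⁿ⁻¹))/k_n + ( y − Πⁿy ), where w := (2/k_n)·(W(t_{n-1/2}) − W(t_{n-1}))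 and y := i·α·ℓ₀(t)·Δⁿ⁻¹Uⁿ⁻¹ + Uⁿ⁻¹/k_n. -/
/-!
Write `m` for the midpoint of `[tp, tn]`, `k = tn - tp`, and `ιp`, `ιn` for the inclusions of `Vp`
and `Vn` into `H`. Expanding the affine function `W` about `m` splits `(Rn - ιn) (W t)` into a term
with factor `t - m` and the midpoint value `(Rn - ιn) (W m)`. The Crank–Nicolson relation reads
`W m = (P Up - Un) / k`, so the latter is a difference quotient, in which `Rn (P Up)` cancels; the
part of `P Up` that survives is the projection error of `Up / k`. Once the vector
`v = (I * α * ℓ₀ t) • Δp Up` of `Vp` is formed, every remaining operation is real linear.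
-/

open Complex

section Affine

variable {𝕜 V : Type*} [Field 𝕜] [AddCommGroup V] [Module 𝕜 V]

theorem eq_add_smul_slope_of_affine {f : 𝕜 → V} {a : 𝕜} {c : V}
    (hf : ∀ t, f t = f a + (t - a) • c) {m : 𝕜} (hm : m ≠ a) (t : 𝕜) :
    f t = f m + (t - m) • slope f a m := by
  have hslope : slope f a m = c := by
    rw [slope_def_module, hf m, add_sub_cancel_left, inv_smul_smul₀ (sub_ne_zero.mpr hm)]
  rw [hslope, hf t, hf m]
  module

theorem add_div_two_sub_left [NeZero (2 : 𝕜)] (a b : 𝕜) : (a + b) / 2 - a = (b - a) / 2 := by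
  field_simp
  ring

theorem slope_midpoint [NeZero (2 : 𝕜)] (f : 𝕜 → V) (a b : 𝕜) :
    slope f a ((a + b) / 2) = (2 / (b - a)) • (f ((a + b) / 2) - f a) := by
  rw [slope_def_module, add_div_two_sub_left, inv_div]

end Affine

section Residual

variable {𝕜 H Vp Vn : Type*} [AddCommGroup H] [AddCommGroup Vp] [AddCommGroup Vn]

theorem reconstruction_defect_sub_difference_quotient [Ring 𝕜]
    [Module 𝕜 H] [Module 𝕜 Vp] [Module 𝕜 Vn]
    (ιp Rp : Vp →ₗ[𝕜] H) (ιn Rn : Vn →ₗ[𝕜] H) (P : Vp →ₗ[𝕜] Vn) (κ : 𝕜) (u : Vp) (u' : Vn) :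
    (Rn - ιn) (κ • (P u - u')) - κ • (Rn (P u) - Rp u)
      = (ιp (κ • u) - ιn (P (κ • u))) - κ • ((Rn - ιn) u' - (Rp - ιp) u) := by
  simp only [map_smul, map_sub, LinearMap.sub_apply, ← smul_sub]
  congr 1
  abel

theorem first_residual_rewriting_general [Field 𝕜] [NeZero (2 : 𝕜)]
    [Module 𝕜 H] [Module 𝕜 Vp] [Module 𝕜 Vn]
    (ιp Rp : Vp →ₗ[𝕜] H) (ιn Rn : Vn →ₗ[𝕜] H) (P : Vp →ₗ[𝕜] Vn)
    {tp tn : 𝕜} (htptn : tp ≠ tn) {Up : Vp} {Un : Vn}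
    {W : 𝕜 → Vn} {c : Vn} (hW : ∀ t, W t = W tp + (t - tp) • c)
    (hCN : Un = P Up - (tn - tp) • W ((tp + tn) / 2)) (t : 𝕜) (v : Vp) :
    (Rn - ιn) (W t) - (1 / (tn - tp)) • (Rn (P Up) - Rp Up) + (ιp v - ιn (P v))
      = (t - (tp + tn) / 2) • (Rn - ιn) ((2 / (tn - tp)) • (W ((tp + tn) / 2) - W tp))
        - (1 / (tn - tp)) • ((Rn - ιn) Un - (Rp - ιp) Up)
        + (ιp (v + (1 / (tn - tp)) • Up) - ιn (P (v + (1 / (tn - tp)) • Up))) := by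
  set m := (tp + tn) / 2 with hm
  set w := (2 / (tn - tp)) • (W m - W tp)
  set κ := 1 / (tn - tp) with hκ
  have hk : tn - tp ≠ 0 := sub_ne_zero.mpr htptn.symm
  have hmtp : m ≠ tp := by
    rw [← sub_ne_zero, hm, add_div_two_sub_left]
    exact div_ne_zero hk two_ne_zero
  have expansion : W t = W m + (t - m) • w := by
    rw [eq_add_smul_slope_of_affine hW hmtp t, hm, slope_midpoint]
  have midpoint_value : W m = κ • (P Up - Un) := by
    rw [hCN, sub_sub_cancel, hκ, one_div, inv_smul_smul₀ hk]
  calc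
    _ = (t - m) • (Rn - ιn) w
          + ((Rn - ιn) (κ • (P Up - Un)) - κ • (Rn (P Up) - Rp Up)) + (ιp v - ιn (P v)) := by
      rw [expansion, map_add, map_smul, ← midpoint_value]
      abel
    _ = (t - m) • (Rn - ιn) w
          + ((ιp (κ • Up) - ιn (P (κ • Up))) - κ • ((Rn - ιn) Un - (Rp - ιp) Up))
          + (ιp v - ιn (P v)) := by
      rw [reconstruction_defect_sub_difference_quotient ιp]
    _ = _ := by
      simp only [map_add]
      abel

end Residual

/-- Rewriting of the first residual (Lemma 3.4 of the paper): under the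
Crank–Nicolson relation `Uⁿ = ΠⁿUⁿ⁻¹ − kₙ·W(t_{n-1/2})`, for every `t ∈ [t_{n-1}, tₙ]`,
`R₁(t) = (t − t_{n-1/2})·(Rⁿw − w) − ((RⁿUⁿ − Uⁿ) − (Rⁿ⁻¹Uⁿ⁻¹ − Uⁿ⁻¹))/kₙ + (y − Πⁿy)`,
with `w := (2/kₙ)(W(t_{n-1/2}) − W(t_{n-1}))` and `y := iαℓ₀(t)·Δⁿ⁻¹Uⁿ⁻¹ + Uⁿ⁻¹/kₙ`. -/
theorem first_residual_rewriting
    {H : Type*} [NormedAddCommGroup H] [InnerProductSpace ℂ H] [CompleteSpace H]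
    (tp tn : ℝ) (htptn : tp < tn)
    (α : ℝ)
    (Vp Vn : Submodule ℂ H) [FiniteDimensional ℂ Vp] [FiniteDimensional ℂ Vn]
    (Δp : Vp →ₗ[ℂ] Vp)
    (Rp : Vp →ₗ[ℂ] H) (Rn : Vn →ₗ[ℂ] H)
    (P : Vp →ₗ[ℂ] Vn)
    (Up : Vp) (Un : Vn)
    (W : ℝ → Vn) (c : Vn) (hW : ∀ t : ℝ, W t = W tp + ((t - tp : ℝ) : ℂ) • c)
    (hCN : Un = P Up - ((tn - tp : ℝ) : ℂ) • W ((tp + tn) / 2))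
    (R₁ : ℝ → H)
    (hR₁ : ∀ t : ℝ, R₁ t
        = (Rn (W t) - ((W t : Vn) : H))
          - ((1 / (tn - tp) : ℝ) : ℂ) • (Rn (P Up) - Rp Up)
          + (Complex.I * (α : ℂ) * (((tn - t) / (tn - tp) : ℝ) : ℂ)) •
              (((Δp Up : Vp) : H) - ((P (Δp Up) : Vn) : H))) :
    ∀ t ∈ Set.Icc tp tn,
      R₁ t
        = ((t - (tp + tn) / 2 : ℝ) : ℂ) •
              (Rn (((2 / (tn - tp) : ℝ) : ℂ) • (W ((tp + tn) / 2) - W tp))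
                - ((((2 / (tn - tp) : ℝ) : ℂ) • (W ((tp + tn) / 2) - W tp) : Vn) : H))
          - ((1 / (tn - tp) : ℝ) : ℂ) •
              ((Rn Un - ((Un : Vn) : H)) - (Rp Up - ((Up : Vp) : H)))
          + ((((Complex.I * (α : ℂ) * (((tn - t) / (tn - tp) : ℝ) : ℂ)) • Δp Up
                + ((1 / (tn - tp) : ℝ) : ℂ) • Up : Vp) : H)
              - ((P ((Complex.I * (α : ℂ) * (((tn - t) / (tn - tp) : ℝ) : ℂ)) • Δp Up
                + ((1 / (tn - tp) : ℝ) : ℂ) • Up) : Vn) : H)) := by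
  intro t _
  rw [hR₁ t, smul_sub (I * _ * _), ← Submodule.coe_smul, ← Submodule.coe_smul, ← P.map_smul]
  -- For real `r`, the scalar multiplications `(r : ℂ) • x` and `r • x` agree definitionally.
  exact first_residual_rewriting_general
    (Vp.subtype.restrictScalars ℝ) (Rp.restrictScalars ℝ) (Vn.subtype.restrictScalars ℝ)
    (Rn.restrictScalars ℝ) (P.restrictScalars ℝ) htptn.ne hW hCN t
    ((I * α * ((tn - t) / (tn - tp) : ℝ)) • Δp Up)
end
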